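/- There exists a constant C > 0 such that for any v, w ∈ ℍ and any δ > 0, the set {θ ∈ [0,π) : d_ℍ(P_{V_θ^⊥}(v), P_{V_θ^⊥}(w)) ≤ δ} is contained in a disjoint union of at most 40 intervals, each of length less than Cδ/d_ℍ(v,w). -/

import Mathlib

open Real MeasureTheory

noncomputable section

/-- Points of the plane. -/
abbrev Pt := ℝ × ℝ
/-- Points of the Heisenberg group ℍ ≅ ℂ × ℝ ≅ ℝ² × ℝ. -/
abbrev Heis := (ℝ × ℝ) × ℝ

/-- Wedge product on ℝ². -/
def wedge (z w : Pt) : ℝ := z.1 * w.2 - z.2 * w.1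

/-- Euclidean inner product on ℝ². -/
def dotP (z w : Pt) : ℝ := z.1 * w.1 + z.2 * w.2

/-- Euclidean norm on ℝ². -/
def nrm (z : Pt) : ℝ := Real.sqrt (z.1 ^ 2 + z.2 ^ 2)

/-- The unit vector e^{iθ} = (cos θ, sin θ). -/
def eV (θ : ℝ) : Pt := (Real.cos θ, Real.sin θ)

/-- The unit vector i·e^{iθ} = (−sin θ, cos θ). -/
def ieV (θ : ℝ) : Pt := (-Real.sin θ, Real.cos θ)

/-- Orthogonal projection onto the line V_θ spanned by e^{iθ}. -/
def projV (θ : ℝ) (z : Pt) : Pt := (dotP z (eV θ)) • eV θ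

/-- Orthogonal projection onto the orthogonal complement V_θ^⊥, spanned by i·e^{iθ}. -/
def projVperp (θ : ℝ) (z : Pt) : Pt := (dotP z (ieV θ)) • ieV θ

/-- Heisenberg group law. -/
def hmul (v w : Heis) : Heis := (v.1 + w.1, v.2 + w.2 - 2 * wedge v.1 w.1)

/-- Heisenberg group inverse. -/
def hinv (v : Heis) : Heis := (-v.1, -v.2)

/-- Korányi norm ‖(z,t)‖ = (|z|⁴ + t²)^{1/4}. -/
def Knorm (v : Heis) : ℝ := ((nrm v.1) ^ 4 + v.2 ^ 2) ^ ((1 : ℝ) / 4)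

/-- Korányi distance (via the explicit second-component formula). -/
def dH (v w : Heis) : ℝ :=
  ((nrm (v.1 - w.1)) ^ 4 + (v.2 - w.2 - 2 * wedge v.1 w.1) ^ 2) ^ ((1 : ℝ) / 4)

/-- Horizontal projection P_{V_θ}. -/
def PV (θ : ℝ) (v : Heis) : Heis := (projV θ v.1, 0)

/-- Vertical projection P_{V_θ^⊥}. -/
def PVperp (θ : ℝ) (v : Heis) : Heis :=
  (projVperp θ v.1, v.2 - 2 * wedge (projV θ v.1) (projVperp θ v.1))

/-!
For `θ ∈ [0, π)` the vertical projections of `v = (z, t)` and `w = (ζ, τ)` differ horizontally by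
`|z - ζ| |sin (θ - φ)|`, where `φ` is the direction of `z - ζ`, and vertically by a function
`heightGap v w θ = A + B sin (ψ - 2 * θ)` with `|B| = |z - ζ| |z + ζ|`. The height gap at `φ` is
exactly the vertical part of the distance, so `d(v, w)⁴ = |z - ζ|⁴ + (heightGap v w φ)²`.

If `|z - ζ|` is comparable to `d(v, w)`, the angles in question lie where `sin (θ - φ)` is
`O(δ / d)`. Otherwise `|heightGap v w φ|` is comparable to `d²`. If `|B|` is comparable to `d²` as
well, the angles lie in a sublevel set `|sin (ψ - 2 * θ) - κ| = O(δ² / d²)`, and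
the factorisation of a difference of sines shows that such a set has width `O(δ / d)` even around
the critical points of `sin`. If `|B|` is much smaller than `d²`, the height gap stays comparable
to `d²` at all angles, so `δ` is comparable to `d` and one interval suffices.
-/

open Metric

section IntervalMerging

variable {α : Type*} [AddCommGroup α] [LinearOrder α] [IsOrderedAddMonoid α]

lemma length_sup_le_of_not_disjoint {I J : NonemptyInterval α}
    (h : ¬Disjoint (I : Set α) (J : Set α)) : (I ⊔ J).length ≤ I.length + J.length := by
  obtain ⟨x, ⟨hIx, hxI⟩, hJx, hxJ⟩ := Set.not_disjoint_iff.1 h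
  simp only [NonemptyInterval.length, NonemptyInterval.fst_sup, NonemptyInterval.snd_sup]
  rcases min_cases I.fst J.fst with ⟨hm, -⟩ | ⟨hm, -⟩ <;>
    rcases max_cases I.snd J.snd with ⟨hM, -⟩ | ⟨hM, -⟩ <;> rw [hm, hM] <;> grind

lemma exists_card_lt_cover_of_not_disjoint {F : Finset (NonemptyInterval α)}
    {I J : NonemptyInterval α} (hI : I ∈ F) (hJ : J ∈ F) (hIJ : I ≠ J)
    (h : ¬Disjoint (I : Set α) (J : Set α)) :
    ∃ G : Finset (NonemptyInterval α), G.card < F.card ∧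
      ∑ K ∈ G, K.length ≤ ∑ K ∈ F, K.length ∧ (⋃ K ∈ F, (K : Set α)) ⊆ ⋃ K ∈ G, (K : Set α) := by
  classical
  have hJ' : J ∈ F.erase I := Finset.mem_erase.2 ⟨hIJ.symm, hJ⟩
  set E := (F.erase I).erase J
  refine ⟨insert (I ⊔ J) E, ?_, ?_, Set.iUnion₂_subset fun K hK => ?_⟩
  · have := Finset.card_insert_le (I ⊔ J) E
    have := Finset.card_erase_add_one hJ'
    have := Finset.card_erase_add_one hI
    lia
  · calc ∑ K ∈ insert (I ⊔ J) E, K.length ≤ (I ⊔ J).length + ∑ K ∈ E, K.length := by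
          by_cases hmem : I ⊔ J ∈ E
          · rw [Finset.insert_eq_of_mem hmem]
            exact le_add_of_nonneg_left (I ⊔ J).length_nonneg
          · rw [Finset.sum_insert hmem]
      _ ≤ I.length + J.length + ∑ K ∈ E, K.length := by
          gcongr; exact length_sup_le_of_not_disjoint h
      _ = ∑ K ∈ F, K.length := by
          rw [add_assoc, Finset.add_sum_erase _ _ hJ', Finset.add_sum_erase _ _ hI]
  · obtain ⟨L, hL, hKL⟩ : ∃ L ∈ insert (I ⊔ J) E, K ≤ L := by
      by_cases hK' : K ∈ E
      · exact ⟨K, Finset.mem_insert_of_mem hK', le_rfl⟩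
      · obtain rfl | rfl : K = J ∨ K = I := by grind
        · exact ⟨_, Finset.mem_insert_self _ _, le_sup_right⟩
        · exact ⟨_, Finset.mem_insert_self _ _, le_sup_left⟩
    exact (NonemptyInterval.coe_subset_coe.2 hKL).trans
      (Set.subset_biUnion_of_mem (u := fun L : NonemptyInterval α => (L : Set α)) hL)

lemma exists_pairwiseDisjoint_cover (F : Finset (NonemptyInterval α)) :
    ∃ G : Finset (NonemptyInterval α), G.card ≤ F.card ∧
      (G : Set (NonemptyInterval α)).PairwiseDisjoint (fun I => (I : Set α)) ∧
      ∑ I ∈ G, I.length ≤ ∑ I ∈ F, I.length ∧ (⋃ I ∈ F, (I : Set α)) ⊆ ⋃ I ∈ G, (I : Set α) := by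
  -- A cover with the fewest intervals, among those of no larger total length, is disjoint.
  obtain ⟨G, ⟨hlen, hcover⟩, hmin⟩ := exists_minimalFor_of_wellFoundedLT
    (fun G : Finset (NonemptyInterval α) => ∑ I ∈ G, I.length ≤ ∑ I ∈ F, I.length ∧
      (⋃ I ∈ F, (I : Set α)) ⊆ ⋃ I ∈ G, (I : Set α)) Finset.card ⟨F, le_rfl, le_rfl⟩
  refine ⟨G, (le_total _ _).elim id (hmin ⟨le_rfl, le_rfl⟩), ?_, hlen, hcover⟩
  intro I hI J hJ hIJ
  by_contra hdisj
  obtain ⟨G', hcard, hlen', hcover'⟩ := exists_card_lt_cover_of_not_disjoint hI hJ hIJ hdisj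
  exact hcard.not_ge (hmin ⟨hlen'.trans hlen, hcover.trans hcover'⟩ hcard.le)

end IntervalMerging

section Covering

variable {X : Type*} [PseudoMetricSpace X] {m n : ℕ} {r : ℝ} {S T : Set X}

/-- `S` is covered by at most `n` closed balls of radius `r`, with centres anywhere in the space:
the form, with a real radius, of `Metric.externalCoveringNumber r S ≤ n`. -/
def IsCoveredByBalls (n : ℕ) (r : ℝ) (S : Set X) : Prop :=
  ∃ A : Finset X, A.card ≤ n ∧ S ⊆ ⋃ c ∈ A, closedBall c r

namespace IsCoveredByBalls

lemma of_subset_closedBall {c : X} (h : S ⊆ closedBall c r) : IsCoveredByBalls 1 r S :=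
  ⟨{c}, by simp, by simpa using h⟩

lemma mono (h : IsCoveredByBalls m r T) (hmn : m ≤ n) (hST : S ⊆ T) : IsCoveredByBalls n r S := by
  obtain ⟨A, hA, hTA⟩ := h
  exact ⟨A, hA.trans hmn, hST.trans hTA⟩

lemma union (hS : IsCoveredByBalls m r S) (hT : IsCoveredByBalls n r T) :
    IsCoveredByBalls (m + n) r (S ∪ T) := by
  classical
  obtain ⟨A, hA, hSA⟩ := hS
  obtain ⟨B, hB, hTB⟩ := hT
  refine ⟨A ∪ B, (Finset.card_union_le A B).trans (add_le_add hA hB), ?_⟩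
  rw [Finset.set_biUnion_union]
  exact Set.union_subset_union hSA hTB

lemma exists_pairwiseDisjoint_intervals {S : Set ℝ} (h : IsCoveredByBalls n r S) (hr : 0 ≤ r) :
    ∃ G : Finset (NonemptyInterval ℝ), G.card ≤ n ∧
      (G : Set (NonemptyInterval ℝ)).PairwiseDisjoint (fun I => (I : Set ℝ)) ∧
      (∀ I ∈ G, I.length ≤ n * (2 * r)) ∧ S ⊆ ⋃ I ∈ G, (I : Set ℝ) := by
  classical
  obtain ⟨A, hA, hSA⟩ := h
  let ball (c : ℝ) : NonemptyInterval ℝ := ⟨(c - r, c + r), by linarith⟩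
  have hball_length (c : ℝ) : (ball c).length = 2 * r := by
    simp only [ball, NonemptyInterval.length]; ring
  have hball_coe (c : ℝ) : (ball c : Set ℝ) = closedBall c r := (Real.closedBall_eq_Icc).symm
  have hcard : (A.image ball).card ≤ n := Finset.card_image_le.trans hA
  have hsum : ∑ I ∈ A.image ball, I.length ≤ n * (2 * r) := by
    rw [← nsmul_eq_mul]
    refine (Finset.sum_le_card_nsmul _ _ (2 * r) ?_).trans (by gcongr)
    simp [hball_length]
  obtain ⟨G, hGcard, hGdisj, hGsum, hGcover⟩ := exists_pairwiseDisjoint_cover (A.image ball)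
  refine ⟨G, hGcard.trans hcard, hGdisj, fun I hI => ?_, hSA.trans ?_⟩
  · exact (Finset.single_le_sum (fun J _ => J.length_nonneg) hI).trans (hGsum.trans hsum)
  · simpa only [Finset.set_biUnion_finset_image, hball_coe] using hGcover

end IsCoveredByBalls

end Covering

section SineLevelSets

lemma exists_int_abs_sub_mul_pi_le (x : ℝ) : ∃ k : ℤ, |x - k * π| ≤ π / 2 * |sin x| := by
  refine ⟨round (x / π), ?_⟩
  have hhalf : |x - round (x / π) * π| ≤ π / 2 := by
    have h := abs_sub_round (x / π)
    rwa [← mul_le_mul_iff_left₀ pi_pos, ← abs_of_pos pi_pos, ← abs_mul, abs_of_pos pi_pos, sub_mul,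
      div_mul_cancel₀ _ pi_ne_zero, one_div_mul_eq_div] at h
  have hsin := mul_abs_le_abs_sin hhalf
  rw [sin_sub_int_mul_pi, abs_mul, abs_neg_one_zpow, one_mul] at hsin
  calc |x - round (x / π) * π| = π / 2 * (2 / π * |x - round (x / π) * π|) := by field_simp
    _ ≤ π / 2 * |sin x| := by gcongr

lemma isCoveredByBalls_abs_sin_sub_le (a β s : ℝ) :
    IsCoveredByBalls 2 (π / 2 * s) {θ ∈ Set.Ico a (a + π) | |sin (θ - β)| ≤ s} := by
  -- The multiples `k * π` close to `θ - β` have `k` in a half-open interval of length `2`.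
  set m : ℤ := ⌈(a - β) / π - 1 / 2⌉ with hm
  refine ⟨{β + m * π, β + (m + 1) * π}, Finset.card_le_two, ?_⟩
  rintro θ ⟨⟨haθ, hθa⟩, hsin⟩
  obtain ⟨k, hk⟩ := exists_int_abs_sub_mul_pi_le (θ - β)
  have hhalf : |θ - β - k * π| ≤ π / 2 :=
    hk.trans (mul_le_of_le_one_right (by positivity) (abs_sin_le_one _))
  obtain ⟨hlo, hhi⟩ := abs_le.1 hhalf
  have hmk : m ≤ k := by
    rw [hm, Int.ceil_le, sub_le_iff_le_add, div_le_iff₀ pi_pos]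
    linarith
  have hkm : k < m + 2 := by
    have hceil : (a - β) / π - 1 / 2 ≤ m := Int.le_ceil _
    rw [sub_le_iff_le_add, div_le_iff₀ pi_pos] at hceil
    have : (k : ℝ) * π < (m + 2) * π := by linarith
    exact_mod_cast lt_of_mul_lt_mul_right this pi_pos.le
  have hdist : θ ∈ closedBall (β + k * π) (π / 2 * s) := by
    rw [mem_closedBall, Real.dist_eq, ← sub_sub]
    exact hk.trans (by gcongr)
  obtain rfl | rfl : k = m ∨ k = m + 1 := by lia
  · exact Set.mem_biUnion (by simp) hdist
  · push_cast at hdist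
    exact Set.mem_biUnion (by simp) hdist

lemma abs_sin_sub_sin_arcsin_le (x κ : ℝ) : |sin x - sin (arcsin κ)| ≤ |sin x - κ| := by
  have h : (-1 : ℝ) ≤ 1 := by norm_num
  calc |sin x - sin (arcsin κ)|
      = |(Set.projIcc (-1) 1 h (sin x) : ℝ) - Set.projIcc (-1) 1 h κ| := by
        rw [Set.projIcc_of_mem h (sin_mem_Icc x), ← arcsin_projIcc κ, sin_arcsin' (Subtype.prop _)]
    _ ≤ |sin x - κ| := Set.abs_projIcc_sub_projIcc h

lemma abs_sin_le_or_abs_cos_le_of_abs_sin_sub_sin_le {x y s : ℝ} (hs : 0 ≤ s)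
    (h : |sin x - sin y| ≤ 2 * s ^ 2) : |sin ((x - y) / 2)| ≤ s ∨ |cos ((x + y) / 2)| ≤ s := by
  by_contra! hlt
  have := mul_lt_mul'' hlt.1 hlt.2 hs hs
  rw [sin_sub_sin, mul_assoc, abs_mul, abs_mul, abs_two] at h
  linarith

lemma isCoveredByBalls_abs_sin_sub_two_mul_sub_le (a ψ κ : ℝ) {s : ℝ} (hs : 0 ≤ s) :
    IsCoveredByBalls 4 (π / 2 * s)
      {θ ∈ Set.Ico a (a + π) | |sin (ψ - 2 * θ) - κ| ≤ 2 * s ^ 2} := by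
  set y := arcsin κ with hy
  refine ((isCoveredByBalls_abs_sin_sub_le a ((ψ - y) / 2) s).union
    (isCoveredByBalls_abs_sin_sub_le a ((ψ + y) / 2 - π / 2) s)).mono le_rfl ?_
  rintro θ ⟨hθ, hκ⟩
  have hsin : sin ((ψ - 2 * θ - y) / 2) = -sin (θ - (ψ - y) / 2) := by
    rw [← sin_neg]; ring_nf
  have hcos : cos ((ψ - 2 * θ + y) / 2) = sin (θ - ((ψ + y) / 2 - π / 2)) := by
    rw [← cos_neg, ← sin_add_pi_div_two]; ring_nf
  have h := abs_sin_le_or_abs_cos_le_of_abs_sin_sub_sin_le hs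
    ((abs_sin_sub_sin_arcsin_le (ψ - 2 * θ) κ).trans hκ)
  rw [← hy, hsin, abs_neg, hcos] at h
  exact h.imp (⟨hθ, ·⟩) (⟨hθ, ·⟩)

end SineLevelSets

section Plane

lemma dotP_smul_left (c : ℝ) (z w : Pt) : dotP (c • z) w = c * dotP z w := by
  simp only [dotP, Prod.smul_fst, Prod.smul_snd, smul_eq_mul]; ring

lemma dotP_eV_eV (φ θ : ℝ) : dotP (eV φ) (eV θ) = cos (φ - θ) := (cos_sub φ θ).symm

lemma dotP_eV_ieV (φ θ : ℝ) : dotP (eV φ) (ieV θ) = sin (φ - θ) := by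
  rw [sin_sub, dotP, eV, ieV]; ring

lemma wedge_self (z : Pt) : wedge z z = 0 := by rw [wedge]; ring

lemma wedge_sub_add (z w : Pt) : wedge (z - w) (z + w) = 2 * wedge z w := by
  simp only [wedge, Prod.fst_sub, Prod.snd_sub, Prod.fst_add, Prod.snd_add]; ring

lemma wedge_smul_left (c : ℝ) (z w : Pt) : wedge (c • z) w = c * wedge z w := by
  simp only [wedge, Prod.smul_fst, Prod.smul_snd, smul_eq_mul]; ring

lemma wedge_smul_right (c : ℝ) (z w : Pt) : wedge z (c • w) = c * wedge z w := by
  simp only [wedge, Prod.smul_fst, Prod.smul_snd, smul_eq_mul]; ring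

lemma wedge_eV_left (φ : ℝ) (z : Pt) : wedge (eV φ) z = dotP z (ieV φ) := by
  rw [wedge, dotP, eV, ieV]; ring

lemma dotP_ieV_ieV_self (θ : ℝ) : dotP (ieV θ) (ieV θ) = 1 := by
  rw [dotP, ieV, ← sin_sq_add_cos_sq θ]; ring

lemma nrm_nonneg (z : Pt) : 0 ≤ nrm z := sqrt_nonneg _

lemma nrm_pos {z : Pt} (hz : z ≠ 0) : 0 < nrm z := by
  refine sqrt_pos.2 (lt_of_le_of_ne (by positivity) fun h => hz (Prod.ext ?_ ?_)) <;>
    exact pow_eq_zero_iff two_ne_zero |>.1 (by nlinarith [sq_nonneg z.1, sq_nonneg z.2])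

lemma nrm_smul_ieV (c θ : ℝ) : nrm (c • ieV θ) = |c| := by
  rw [nrm, ← sqrt_sq_eq_abs, ← mul_one (c ^ 2), ← sin_sq_add_cos_sq θ]
  simp only [ieV, Prod.smul_fst, Prod.smul_snd, smul_eq_mul]
  ring_nf

lemma exists_eq_nrm_smul_eV (z : Pt) : ∃ φ : ℝ, z = nrm z • eV φ := by
  have hnorm : nrm z = ‖(⟨z.1, z.2⟩ : ℂ)‖ := by
    rw [nrm, Complex.norm_eq_sqrt_sq_add_sq]
  refine ⟨Complex.arg ⟨z.1, z.2⟩, ?_⟩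
  rw [hnorm, eV, Prod.smul_mk, smul_eq_mul, smul_eq_mul, Complex.norm_mul_cos_arg,
    Complex.norm_mul_sin_arg]

lemma projVperp_sub (θ : ℝ) (z w : Pt) :
    projVperp θ z - projVperp θ w = dotP (z - w) (ieV θ) • ieV θ := by
  rw [projVperp, projVperp, ← sub_smul]
  congr 1
  simp only [dotP, Prod.fst_sub, Prod.snd_sub]; ring

lemma wedge_projVperp_projVperp (θ : ℝ) (z w : Pt) :
    wedge (projVperp θ z) (projVperp θ w) = 0 := by
  rw [projVperp, projVperp, wedge_smul_left, wedge_smul_right, wedge_self, mul_zero, mul_zero]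

lemma wedge_projV_projVperp (θ : ℝ) (z : Pt) :
    wedge (projV θ z) (projVperp θ z) = dotP z (eV θ) * dotP z (ieV θ) := by
  rw [projV, projVperp, wedge_smul_left, wedge_smul_right, wedge_eV_left, dotP_ieV_ieV_self,
    mul_one]

end Plane

section KoranyiDistance

lemma dH_nonneg (v w : Heis) : 0 ≤ dH v w := by
  rw [dH]; positivity

lemma dH_pow_four (v w : Heis) :
    dH v w ^ 4 = nrm (v.1 - w.1) ^ 4 + (v.2 - w.2 - 2 * wedge v.1 w.1) ^ 2 := by
  rw [dH, one_div]
  exact rpow_inv_natCast_pow (by positivity) four_ne_zero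

lemma dH_pos {v w : Heis} (h : v ≠ w) : 0 < dH v w := by
  refine rpow_pos_of_pos ?_ _
  by_cases hz : v.1 = w.1
  · have ht : v.2 - w.2 ≠ 0 := sub_ne_zero.2 fun ht => h (Prod.ext hz ht)
    rw [hz, wedge_self, mul_zero, sub_zero]
    positivity
  · have := nrm_pos (sub_ne_zero.2 hz)
    positivity

end KoranyiDistance

section VerticalProjection

variable {v w : Heis}

/-- The difference of the vertical coordinates of the projections of `v` and `w` to `V_θ^⊥`. The
horizontal parts of these projections are parallel, so this is the vertical part of their
Korányi distance. -/
def heightGap (v w : Heis) (θ : ℝ) : ℝ := (PVperp θ v).2 - (PVperp θ w).2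

lemma dH_PVperp_pow_four (v w : Heis) (θ : ℝ) :
    dH (PVperp θ v) (PVperp θ w) ^ 4 = dotP (v.1 - w.1) (ieV θ) ^ 4 + heightGap v w θ ^ 2 := by
  rw [dH_pow_four]
  simp only [PVperp, heightGap, projVperp_sub, nrm_smul_ieV, wedge_projVperp_projVperp, mul_zero,
    sub_zero, Even.pow_abs (show Even 4 by decide)]

lemma abs_dotP_ieV_le_dH_PVperp (v w : Heis) (θ : ℝ) :
    |dotP (v.1 - w.1) (ieV θ)| ≤ dH (PVperp θ v) (PVperp θ w) := by
  refine le_of_pow_le_pow_left₀ four_ne_zero (dH_nonneg _ _) ?_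
  rw [dH_PVperp_pow_four, Even.pow_abs (by decide)]
  exact le_add_of_nonneg_right (sq_nonneg _)

lemma abs_heightGap_le_dH_PVperp_sq (v w : Heis) (θ : ℝ) :
    |heightGap v w θ| ≤ dH (PVperp θ v) (PVperp θ w) ^ 2 := by
  refine abs_le_of_sq_le_sq ?_ (sq_nonneg _)
  rw [← pow_mul, dH_PVperp_pow_four]
  exact le_add_of_nonneg_left (by positivity)

lemma heightGap_eq_sub_dotP (v w : Heis) (θ : ℝ) :
    heightGap v w θ = v.2 - w.2 - (dotP (v.1 - w.1) (eV θ) * dotP (v.1 + w.1) (ieV θ)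
      + dotP (v.1 - w.1) (ieV θ) * dotP (v.1 + w.1) (eV θ)) := by
  simp only [heightGap, PVperp, wedge_projV_projVperp]
  simp only [dotP, Prod.fst_sub, Prod.snd_sub, Prod.fst_add, Prod.snd_add]
  ring

lemma heightGap_eq_sub_sin {R φ S σ : ℝ} (hR : v.1 - w.1 = R • eV φ) (hS : v.1 + w.1 = S • eV σ)
    (θ : ℝ) : heightGap v w θ = v.2 - w.2 - R * S * sin (φ + σ - 2 * θ) := by
  rw [heightGap_eq_sub_dotP, hR, hS]
  simp only [dotP_smul_left, dotP_eV_eV, dotP_eV_ieV]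
  rw [show φ + σ - 2 * θ = (φ - θ) + (σ - θ) by ring, sin_add]
  ring

lemma abs_heightGap_sub_heightGap_le (v w : Heis) (θ φ : ℝ) :
    |heightGap v w θ - heightGap v w φ| ≤ 2 * (nrm (v.1 - w.1) * nrm (v.1 + w.1)) := by
  obtain ⟨α, hα⟩ := exists_eq_nrm_smul_eV (v.1 - w.1)
  obtain ⟨β, hβ⟩ := exists_eq_nrm_smul_eV (v.1 + w.1)
  rw [heightGap_eq_sub_sin hα hβ, heightGap_eq_sub_sin hα hβ, sub_sub_sub_cancel_left, ← mul_sub,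
    abs_mul, abs_of_nonneg (mul_nonneg (nrm_nonneg _) (nrm_nonneg _)), mul_comm (2 : ℝ) (_ * _)]
  have hsin : |sin (α + β - 2 * φ) - sin (α + β - 2 * θ)| ≤ 2 := by
    rw [abs_le]
    constructor <;> linarith [sin_le_one (α + β - 2 * φ), neg_one_le_sin (α + β - 2 * φ),
      sin_le_one (α + β - 2 * θ), neg_one_le_sin (α + β - 2 * θ)]
  exact mul_le_mul_of_nonneg_left hsin (mul_nonneg (nrm_nonneg _) (nrm_nonneg _))

lemma heightGap_of_sub_eq_smul_eV {R φ : ℝ} (hR : v.1 - w.1 = R • eV φ) :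
    heightGap v w φ = v.2 - w.2 - 2 * wedge v.1 w.1 := by
  rw [heightGap_eq_sub_dotP, ← wedge_sub_add, hR, wedge_smul_left, wedge_eV_left, dotP_smul_left,
    dotP_smul_left, dotP_eV_eV, dotP_eV_ieV, sub_self, cos_zero, sin_zero]
  ring

lemma exists_dH_sq_le_two_mul_abs_heightGap (h : 2 * nrm (v.1 - w.1) ≤ dH v w) :
    ∃ φ, dH v w ^ 2 ≤ 2 * |heightGap v w φ| := by
  obtain ⟨φ, hφ⟩ := exists_eq_nrm_smul_eV (v.1 - w.1)
  refine ⟨φ, le_of_pow_le_pow_left₀ two_ne_zero (by positivity) ?_⟩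
  have hdist : dH v w ^ 4 = nrm (v.1 - w.1) ^ 4 + heightGap v w φ ^ 2 := by
    rw [dH_pow_four, heightGap_of_sub_eq_smul_eV hφ]
  have hR : (2 * nrm (v.1 - w.1)) ^ 4 ≤ dH v w ^ 4 :=
    pow_le_pow_left₀ (mul_nonneg two_pos.le (nrm_nonneg _)) h 4
  rw [mul_pow, sq_abs]
  nlinarith [pow_nonneg (dH_nonneg v w) 4]

end VerticalProjection

section Transversality

variable {v w : Heis} {δ : ℝ}

/-- The angles in `[0, π)` at which the vertical projections of `v` and `w` are `δ`-close. -/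
def closeAngles (v w : Heis) (δ : ℝ) : Set ℝ :=
  {θ ∈ Set.Ico 0 π | dH (PVperp θ v) (PVperp θ w) ≤ δ}

lemma abs_heightGap_le_sq_of_mem_closeAngles {θ : ℝ} (hθ : θ ∈ closeAngles v w δ) :
    |heightGap v w θ| ≤ δ ^ 2 :=
  (abs_heightGap_le_dH_PVperp_sq v w θ).trans (pow_le_pow_left₀ (dH_nonneg _ _) hθ.2 2)

lemma isCoveredByBalls_closeAngles_of_dH_le (hd : 0 < dH v w)
    (h : dH v w ≤ 2 * nrm (v.1 - w.1)) :
    IsCoveredByBalls 2 (π * (δ / dH v w)) (closeAngles v w δ) := by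
  obtain ⟨φ, hφ⟩ := exists_eq_nrm_smul_eV (v.1 - w.1)
  have hcover := isCoveredByBalls_abs_sin_sub_le 0 φ (2 * (δ / dH v w))
  rw [zero_add, ← mul_assoc, div_mul_cancel₀ _ two_ne_zero] at hcover
  refine hcover.mono le_rfl fun θ hθ => ⟨hθ.1, ?_⟩
  have hsin : nrm (v.1 - w.1) * |sin (θ - φ)| ≤ δ := by
    calc nrm (v.1 - w.1) * |sin (θ - φ)| = |dotP (v.1 - w.1) (ieV θ)| := by
          rw [← neg_sub φ θ, sin_neg, abs_neg, ← dotP_eV_ieV, ← abs_of_nonneg (nrm_nonneg _),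
            ← abs_mul, ← dotP_smul_left, ← hφ]
      _ ≤ δ := (abs_dotP_ieV_le_dH_PVperp v w θ).trans hθ.2
  rw [← mul_div_assoc, le_div_iff₀ hd]
  linarith [mul_le_mul_of_nonneg_right h (abs_nonneg (sin (θ - φ)))]

lemma isCoveredByBalls_closeAngles_of_dH_sq_le (hd : 0 < dH v w) (hδ : 0 ≤ δ)
    (h : dH v w ^ 2 ≤ 8 * (nrm (v.1 - w.1) * nrm (v.1 + w.1))) :
    IsCoveredByBalls 4 (π * (δ / dH v w)) (closeAngles v w δ) := by
  obtain ⟨φ, hφ⟩ := exists_eq_nrm_smul_eV (v.1 - w.1)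
  obtain ⟨σ, hσ⟩ := exists_eq_nrm_smul_eV (v.1 + w.1)
  set B := nrm (v.1 - w.1) * nrm (v.1 + w.1)
  have hB : 0 < B := by linarith [pow_pos hd 2]
  have hcover := isCoveredByBalls_abs_sin_sub_two_mul_sub_le 0 (φ + σ) ((v.2 - w.2) / B)
    (s := 2 * (δ / dH v w)) (by positivity)
  rw [zero_add, ← mul_assoc, div_mul_cancel₀ _ two_ne_zero] at hcover
  refine hcover.mono le_rfl fun θ hθ => ⟨hθ.1, ?_⟩
  have hgap : heightGap v w θ = -(B * (sin (φ + σ - 2 * θ) - (v.2 - w.2) / B)) := by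
    rw [heightGap_eq_sub_sin hφ hσ, mul_sub, mul_div_cancel₀ _ hB.ne']; ring
  have hlevel := abs_heightGap_le_sq_of_mem_closeAngles hθ
  rw [hgap, abs_neg, abs_mul, abs_of_pos hB, ← le_div_iff₀' hB] at hlevel
  calc |sin (φ + σ - 2 * θ) - (v.2 - w.2) / B| ≤ δ ^ 2 / B := hlevel
    _ ≤ δ ^ 2 / (dH v w ^ 2 / 8) := by gcongr; linarith
    _ = 2 * (2 * (δ / dH v w)) ^ 2 := by field_simp; norm_num

lemma isCoveredByBalls_closeAngles_of_le_dH (hd : 0 < dH v w)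
    (h₁ : 2 * nrm (v.1 - w.1) ≤ dH v w)
    (h₂ : 8 * (nrm (v.1 - w.1) * nrm (v.1 + w.1)) ≤ dH v w ^ 2) :
    IsCoveredByBalls 1 (π * (δ / dH v w)) (closeAngles v w δ) := by
  refine .of_subset_closedBall (c := π / 2) fun θ hθ => ?_
  obtain ⟨φ, hφ⟩ := exists_dH_sq_le_two_mul_abs_heightGap h₁
  have hgap : |heightGap v w φ| ≤ δ ^ 2 + dH v w ^ 2 / 4 := by
    have htri := abs_sub_abs_le_abs_sub (heightGap v w φ) (heightGap v w θ)
    linarith [abs_heightGap_sub_heightGap_le v w φ θ, abs_heightGap_le_sq_of_mem_closeAngles hθ]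
  have hhalf : 1 / 2 ≤ δ / dH v w := by
    rw [le_div_iff₀ hd]
    exact le_of_pow_le_pow_left₀ two_ne_zero ((dH_nonneg _ _).trans hθ.2) (by linarith)
  rw [mem_closedBall, Real.dist_eq]
  calc |θ - π / 2| ≤ π * (1 / 2) := abs_le.2 ⟨by linarith [hθ.1.1], by linarith [hθ.1.2]⟩
    _ ≤ π * (δ / dH v w) := by gcongr

theorem isCoveredByBalls_closeAngles (hvw : v ≠ w) (hδ : 0 ≤ δ) :
    IsCoveredByBalls 4 (π * (δ / dH v w)) (closeAngles v w δ) := by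
  have hd := dH_pos hvw
  rcases le_total (dH v w) (2 * nrm (v.1 - w.1)) with h₁ | h₁
  · exact (isCoveredByBalls_closeAngles_of_dH_le hd h₁).mono (by norm_num) le_rfl
  rcases le_total (dH v w ^ 2) (8 * (nrm (v.1 - w.1) * nrm (v.1 + w.1))) with h₂ | h₂
  · exact isCoveredByBalls_closeAngles_of_dH_sq_le hd hδ h₂
  · exact (isCoveredByBalls_closeAngles_of_le_dH hd h₁ h₂).mono (by norm_num) le_rfl

end Transversality

/-- The transversality lemma: {θ ∈ [0,π) : d_ℍ(P_{V_θ^⊥}v, P_{V_θ^⊥}w) ≤ δ} is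
contained in at most 40 disjoint intervals, each of length less than Cδ/d_ℍ(v,w). -/
theorem stmt_14 :
    ∃ C : ℝ, 0 < C ∧ ∀ v w : Heis, v ≠ w → ∀ δ : ℝ, 0 < δ →
      ∃ (n : ℕ) (a b : Fin n → ℝ), n ≤ 40 ∧
        Pairwise (Function.onFun Disjoint fun i => Set.Icc (a i) (b i)) ∧
        (∀ i, b i - a i < C * δ / dH v w) ∧
        {θ ∈ Set.Ico 0 Real.pi | dH (PVperp θ v) (PVperp θ w) ≤ δ} ⊆
          ⋃ i, Set.Icc (a i) (b i) := by
  refine ⟨9 * π, by positivity, fun v w hvw δ hδ => ?_⟩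
  have hη : 0 < δ / dH v w := div_pos hδ (dH_pos hvw)
  obtain ⟨G, hcard, hdisj, hlength, hcover⟩ :=
    (isCoveredByBalls_closeAngles hvw hδ.le).exists_pairwiseDisjoint_intervals (by positivity)
  let interval (i : Fin G.card) : NonemptyInterval ℝ := G.equivFin.symm i
  refine ⟨G.card, fun i => (interval i).fst, fun i => (interval i).snd, hcard.trans (by norm_num),
    fun i j hij => ?_, fun i => ?_, fun θ hθ => ?_⟩
  · exact hdisj (G.equivFin.symm i).2 (G.equivFin.symm j).2
      ((Subtype.val_injective.comp G.equivFin.symm.injective).ne hij)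
  · calc (interval i).length ≤ (4 : ℕ) * (2 * (π * (δ / dH v w))) :=
          hlength _ (G.equivFin.symm i).2
      _ < 9 * π * (δ / dH v w) := by push_cast; linarith [mul_pos pi_pos hη]
      _ = 9 * π * δ / dH v w := (mul_div_assoc _ _ _).symm
  · obtain ⟨I, hI, hθI⟩ := Set.mem_iUnion₂.1 (hcover hθ)
    refine Set.mem_iUnion.2 ⟨G.equivFin ⟨I, hI⟩, ?_⟩
    simpa only [interval, Equiv.symm_apply_apply] using! hθI
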